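/- arXiv:1903.00203 — 3 statements merged into one kernel-verified Lean document; each statement's English description precedes it below -/
import Mathlib

section
/- For all n ∈ ℕ and u, v ∈ 𝔽: if u·v ∈ I_n and |u·v| = |u| + |v| (i.e., the reduced word of u·v is the concatenation of the reduced words of u and v), then u ∈ I_n and v ∈ I_n. -/
/-!
Write `ellWord n = [ℓ_{n-1}, …, ℓ_0]` as a list of letters. Unfolding the recursion, `IS n` is the set of
products of subsequences of `ellWord n`. Reducing a word only deletes letters, so the reduced word of
such a product is again a subsequence of `ellWord n`; hence `w ∈ IS n` if and only if the reduced word of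
`w` is a subsequence of `ellWord n` (`mem_IS_iff`). This condition passes to prefixes and suffixes of the
reduced word, and the length hypothesis makes `u` and `v` such a prefix and suffix of `u * v`.
-/

open Pointwise

/-- The free group on two generators. -/
abbrev F2 := FreeGroup (Fin 2)

/-- The first generator `a` of the free group. -/
def fa : F2 := FreeGroup.of 0

/-- The second generator `b` of the free group. -/
def fb : F2 := FreeGroup.of 1

/-- `ℓ_n ∈ {a, a⁻¹, b, b⁻¹}` defined according to `n % 4`. -/
def ell (n : ℕ) : F2 :=
  if n % 4 = 0 then fa else if n % 4 = 1 then fa⁻¹ else if n % 4 = 2 then fb else fb⁻¹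

/-- The increasing chain of finite subsets `I_n ⊆ 𝔽`: `I_0 = {e}`,
`I_{n+1} = I_n ∪ ℓ_n · I_n`. -/
def IS : ℕ → Set F2
  | 0 => {1}
  | n + 1 => IS n ∪ ell n • IS n

/-- The set `𝕀` of intervals of `𝔽`: all translates `w · I_n`, together with `∅`. -/
def Intervals : Set (Set F2) :=
  {S | S = ∅ ∨ ∃ (w : F2) (n : ℕ), S = w • IS n}

/-- Word length of an element of the free group: the length of its reduced word. -/
def len (w : F2) : ℕ := w.toWord.length

/-- The letter `ℓ_n`, in the encoding of `FreeGroup` words: a generator together with a sign,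
`true` for the generator and `false` for its inverse. -/
def ellLetter (n : ℕ) : Fin 2 × Bool :=
  if n % 4 = 0 then (0, true) else if n % 4 = 1 then (0, false)
  else if n % 4 = 2 then (1, true) else (1, false)

/-- The word `ℓ_{n-1} ⋯ ℓ_1 ℓ_0`; it is not reduced in general. -/
def ellWord : ℕ → List (Fin 2 × Bool)
  | 0 => []
  | n + 1 => ellLetter n :: ellWord n

lemma mk_ellLetter (n : ℕ) : FreeGroup.mk [ellLetter n] = ell n := by
  unfold ellLetter ell fa fb
  split_ifs <;> simp [FreeGroup.of, FreeGroup.inv_mk, FreeGroup.invRev]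

lemma mk_ellLetter_cons (n : ℕ) (S : List (Fin 2 × Bool)) :
    FreeGroup.mk (ellLetter n :: S) = ell n * FreeGroup.mk S := by
  rw [← mk_ellLetter, FreeGroup.mul_mk, List.singleton_append]

lemma mk_mem_IS_of_sublist (n : ℕ) (S : List (Fin 2 × Bool)) (h : S.Sublist (ellWord n)) :
    FreeGroup.mk S ∈ IS n := by
  induction n generalizing S with
  | zero =>
    obtain rfl : S = [] := List.sublist_nil.mp h
    exact FreeGroup.one_eq_mk.symm
  | succ n ih =>
    cases h with
    | cons _ h => exact Or.inl (ih S h)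
    | cons_cons _ h =>
      exact Or.inr ⟨_, ih _ h, (mk_ellLetter_cons n _).symm⟩

lemma exists_sublist_of_mem_IS (n : ℕ) (w : F2) (h : w ∈ IS n) :
    ∃ S : List (Fin 2 × Bool), S.Sublist (ellWord n) ∧ FreeGroup.mk S = w := by
  induction n generalizing w with
  | zero => exact ⟨[], List.Sublist.slnil, (FreeGroup.one_eq_mk.symm).trans h.symm⟩
  | succ n ih =>
    rcases h with h | ⟨x, hx, rfl⟩
    · obtain ⟨S, hS, rfl⟩ := ih w h
      exact ⟨S, hS.cons _, rfl⟩
    · obtain ⟨S, hS, rfl⟩ := ih x hx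
      exact ⟨ellLetter n :: S, hS.cons_cons _, mk_ellLetter_cons n S⟩

/-- The key characterization: reduction only deletes letters, so a subsequence of `ellWord n`
representing `w` can be taken to be the reduced word of `w`. -/
lemma mem_IS_iff (n : ℕ) (w : F2) : w ∈ IS n ↔ w.toWord.Sublist (ellWord n) := by
  constructor
  · intro h
    obtain ⟨S, hS, rfl⟩ := exists_sublist_of_mem_IS n w h
    rw [FreeGroup.toWord_mk]
    exact (FreeGroup.Red.sublist FreeGroup.reduce.red).trans hS
  · intro h
    simpa only [FreeGroup.mk_toWord] using mk_mem_IS_of_sublist n _ h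

/-- If `u * v ∈ I_n` and the reduced word of `u * v` is the concatenation of the reduced words
of `u` and `v` (i.e. `|u·v| = |u| + |v|`), then `u ∈ I_n` and `v ∈ I_n`. -/
theorem mem_IS_of_concat (n : ℕ) (u v : F2) (hmem : u * v ∈ IS n)
    (hlen : len (u * v) = len u + len v) :
    u ∈ IS n ∧ v ∈ IS n := by
  -- The reduced word of `u * v` is always a subsequence of the concatenation, so equality of
  -- lengths forces equality of words.
  have hword : (u * v).toWord = u.toWord ++ v.toWord :=
    (FreeGroup.toWord_mul_sublist u v).eq_of_length (by simpa [len] using hlen)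
  rw [mem_IS_iff, hword] at hmem
  rw [mem_IS_iff, mem_IS_iff]
  exact ⟨(List.sublist_append_left _ _).trans hmem, (List.sublist_append_right _ _).trans hmem⟩
end

section
/- For all n ∈ ℕ, ℓ ∈ {a, a⁻¹, b, b⁻¹}, and w ∈ 𝔽: if w ∈ ℓ·I_n and w ∉ I_n, then w begins with ℓ, i.e., there exists u ∈ 𝔽 with w = ℓ·u and |w| = 1 + |u|. -/
/-!
Each `I_n` is closed under deleting the first letter of a reduced word (`suffixClosed_IS`).
Given this, let `w = ℓ·u` with `u ∈ I_n`. Either no cancellation occurs in `ℓ·u`, so `w` begins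
with `ℓ`, or `u` begins with `ℓ⁻¹` and `w` is `u` without its first letter, whence `w ∈ I_n`.

The closure property is proved by induction on `n`, with the same dichotomy (`toWord_letter_mul`)
applied to an element `ℓ_n·v` of `ℓ_n·I_n`: without cancellation, deleting its first letter
gives `v ∈ I_n`; otherwise `ℓ_n·v` already lies in `I_n`.
-/

open Pointwise

/-- Multiplying by a letter on the left either prepends it to the reduced word or deletes the
inverse letter from the front. -/
theorem toWord_letter_mul (p : Fin 2 × Bool) (x : F2) :
    (FreeGroup.mk [p] * x).toWord = p :: x.toWord ∨
      x.toWord = (p.1, !p.2) :: (FreeGroup.mk [p] * x).toWord := by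
  have h : (FreeGroup.mk [p] * x).toWord = FreeGroup.reduce (p :: x.toWord) := by
    conv_lhs => rw [← FreeGroup.mk_toWord (x := x)]
    rw [FreeGroup.mul_mk, FreeGroup.toWord_mk]
    rfl
  rw [h, FreeGroup.reduce.cons, FreeGroup.reduce_toWord]
  cases hx : x.toWord with
  | nil => simp
  | cons q L =>
    obtain ⟨i, s⟩ := p
    obtain ⟨j, t⟩ := q
    by_cases hc : i = j ∧ s = !t
    · obtain ⟨rfl, rfl⟩ := hc
      simp
    · simp [hc]

/-- A set of group elements closed under deleting the first letter of a reduced word. -/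
def SuffixClosed (S : Set F2) : Prop :=
  ∀ (p : Fin 2 × Bool) (x y : F2), y.toWord = p :: x.toWord → y ∈ S → x ∈ S

theorem exists_letter {g : F2} (hg : g ∈ ({fa, fa⁻¹, fb, fb⁻¹} : Set F2)) :
    ∃ p, g = FreeGroup.mk [p] := by
  rcases hg with rfl | rfl | rfl | rfl
  · exact ⟨(0, true), rfl⟩
  · exact ⟨(0, false), rfl⟩
  · exact ⟨(1, true), rfl⟩
  · exact ⟨(1, false), rfl⟩

theorem ell_mem (n : ℕ) : ell n ∈ ({fa, fa⁻¹, fb, fb⁻¹} : Set F2) := by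
  unfold ell
  split_ifs <;> simp

theorem suffixClosed_IS (n : ℕ) : SuffixClosed (IS n) := by
  induction n with
  | zero =>
    intro p x y hy h
    obtain rfl : y = 1 := h
    simp at hy
  | succ n ih =>
    rintro p x y hy (h | ⟨v, hv, rfl⟩)
    · exact Or.inl (ih p x y hy h)
    · left
      obtain ⟨q, hq⟩ := exists_letter (ell_mem n)
      simp only [smul_eq_mul, hq] at hy
      rcases toWord_letter_mul q v with h | h
      · rw [h] at hy
        obtain rfl : v = x := FreeGroup.toWord_injective (List.cons.inj hy).2
        exact hv
      · exact ih p x _ hy (ih _ _ v h hv)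

/-- If `ℓ ∈ {a, a⁻¹, b, b⁻¹}` and `w ∈ ℓ·I_n \ I_n`, then `w` begins with `ℓ`:
there is `u` with `w = ℓ·u` and `|w| = 1 + |u|`. -/
theorem begins_with_of_mem_smul_not_mem (n : ℕ) (ℓ w : F2)
    (hℓ : ℓ ∈ ({fa, fa⁻¹, fb, fb⁻¹} : Set F2)) (hw : w ∈ ℓ • IS n) (hnw : w ∉ IS n) :
    ∃ u : F2, w = ℓ * u ∧ len w = 1 + len u := by
  obtain ⟨p, rfl⟩ := exists_letter hℓ
  obtain ⟨u, hu, rfl⟩ := hw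
  refine ⟨u, rfl, ?_⟩
  rcases toWord_letter_mul p u with h | h
  · simp only [len, smul_eq_mul, h, List.length_cons]
    omega
  · exact absurd (suffixClosed_IS n _ _ u h hu) hnw
end

section
/- The chain of sets I_n is strictly increasing and exhausts 𝔽: for every n ∈ ℕ one has I_n ⊊ I_{n+1}, and ⋃_{n∈ℕ} I_n = 𝔽. -/
/-!
Strictness: `IS n` is finite and contains `1`. If `IS (n + 1) = IS n`, then `IS n` would be stable
under left multiplication by `ℓ_n`, hence contain every power of `ℓ_n`; these are infinitely many,
since `ℓ_n ≠ 1` and free groups are torsion-free.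

Exhaustion: each of `a, a⁻¹, b, b⁻¹` occurs as `ℓ_n` for arbitrarily large `n`, so the union of the
increasing chain is stable under left multiplication by each of them. As it contains `1`, it
contains every word (`mul_mem_iUnion_IS`).
-/

open Pointwise

theorem IS_mono : Monotone IS :=
  monotone_nat_of_le_succ fun _ => Set.subset_union_left

theorem one_mem_IS (n : ℕ) : (1 : F2) ∈ IS n :=
  IS_mono (Nat.zero_le n) rfl

theorem IS_finite (n : ℕ) : (IS n).Finite := by
  induction n with
  | zero => exact Set.finite_singleton 1
  | succ n ih => exact ih.union (ih.smul_set)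

theorem ell_ne_one (n : ℕ) : ell n ≠ 1 := by
  unfold ell fa fb
  split_ifs <;> simp [FreeGroup.of_ne_one]

theorem IS_ssubset_succ (n : ℕ) : IS n ⊂ IS (n + 1) := by
  refine ⟨Set.subset_union_left, fun h => ?_⟩
  have hpow : ∀ k : ℕ, ell n ^ k ∈ IS n := by
    intro k
    induction k with
    | zero => simpa using one_mem_IS n
    | succ k ih =>
      rw [pow_succ']
      exact h (Or.inr (Set.smul_mem_smul_set ih))
  have hinj : Function.Injective fun k : ℕ => ell n ^ k :=
    injective_pow_iff_not_isOfFinOrder.2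
      (not_isOfFinOrder_of_isMulTorsionFree (ell_ne_one n))
  exact Set.infinite_of_injective_forall_mem hinj hpow (IS_finite n)

theorem mul_mem_iUnion_IS {g w : F2} (hg : ∀ m, ∃ n, m ≤ n ∧ ell n = g)
    (hw : w ∈ ⋃ n, IS n) : g * w ∈ ⋃ n, IS n := by
  obtain ⟨m, hm⟩ := Set.mem_iUnion.1 hw
  obtain ⟨n, hmn, rfl⟩ := hg m
  exact Set.mem_iUnion.2 ⟨n + 1, Or.inr (Set.smul_mem_smul_set (IS_mono hmn hm))⟩

theorem exists_ell_eq_of (i : Fin 2) (m : ℕ) : ∃ n, m ≤ n ∧ ell n = FreeGroup.of i := by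
  fin_cases i
  · exact ⟨4 * m, by lia, by simp [ell, fa]⟩
  · exact ⟨4 * m + 2, by lia, by simp [ell, fb, Nat.add_mod]⟩

theorem exists_ell_eq_of_inv (i : Fin 2) (m : ℕ) :
    ∃ n, m ≤ n ∧ ell n = (FreeGroup.of i)⁻¹ := by
  fin_cases i
  · exact ⟨4 * m + 1, by lia, by simp [ell, fa, Nat.add_mod]⟩
  · exact ⟨4 * m + 3, by lia, by simp [ell, fb, Nat.add_mod]⟩

theorem mem_iUnion_IS (w : F2) : w ∈ ⋃ n, IS n := by
  -- Strengthening to a statement about `w * v` lets the induction over products of group elements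
  -- use only left multiplication by letters.
  suffices h : ∀ v ∈ ⋃ n, IS n, w * v ∈ ⋃ n, IS n by
    simpa using h 1 (Set.mem_iUnion.2 ⟨0, one_mem_IS 0⟩)
  induction w using FreeGroup.induction_on with
  | C1 => simp
  | of i => exact fun v hv => mul_mem_iUnion_IS (exists_ell_eq_of i) hv
  | inv_of i _ => exact fun v hv => mul_mem_iUnion_IS (exists_ell_eq_of_inv i) hv
  | mul x y hx hy =>
    intro v hv
    rw [mul_assoc]
    exact hx _ (hy v hv)

/-- The chain `I_n` is strictly increasing and exhausts the free group. -/
theorem IS_ssubset_succ_and_iUnion_eq_univ :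
    (∀ n : ℕ, IS n ⊂ IS (n + 1)) ∧ (⋃ n : ℕ, IS n) = Set.univ :=
  ⟨IS_ssubset_succ, Set.eq_univ_of_forall mem_iUnion_IS⟩
end
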